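/- Let G be a finitely generated virtually abelian group with a normal subgroup N of finite index that is isomorphic to ℤⁿ, let S be a finite set generating G as a monoid with weight function ω : S → ℕ₊, and let F be a subgroup of G contained in N. Define the weight of a right coset Fg to be ω(Fg) = min{ω(x) : x ∈ Fg}. Then the weighted growth series of the set of right cosets F\G, namely ∑_{n≥0} #{C ∈ F\G : ω(C) = n} zⁿ, is a rational power series. -/

import Mathlib

/-- The weight of a group element `g` with respect to a generating set `S` and a
weight function `ω`: the minimal total weight among all words over `S` representing `g`. -/
noncomputable def wordWeight {G : Type*} [Group G] (S : Set G) (ω : G → ℕ) (g : G) : ℕ :=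
  sInf {n | ∃ l : List G, (∀ x ∈ l, x ∈ S) ∧ l.prod = g ∧ (l.map ω).sum = n}

/-- The weight of a right coset `Fg`: the minimal weight of an element of the coset. -/
noncomputable def cosetWeight {G : Type*} [Group G] (S : Set G) (ω : G → ℕ)
    (F : Subgroup G) (C : Quotient (QuotientGroup.rightRel F)) : ℕ :=
  sInf {n | ∃ g : G, Quotient.mk (QuotientGroup.rightRel F) g = C ∧ wordWeight S ω g = n}

/-- A formal power series with integer coefficients is rational if it is the quotient
of two integer polynomials. -/
def IsRationalSeries (f : PowerSeries ℤ) : Prop :=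
  ∃ p q : Polynomial ℤ, q ≠ 0 ∧ f * (q : PowerSeries ℤ) = (p : PowerSeries ℤ)

/-! ### Rational series -/

lemma IsRationalSeries.zero : IsRationalSeries 0 := ⟨0, 1, one_ne_zero, by simp⟩

lemma IsRationalSeries.add {f g : PowerSeries ℤ} (hf : IsRationalSeries f)
    (hg : IsRationalSeries g) : IsRationalSeries (f + g) := by
  obtain ⟨p, q, hq, h⟩ := hf
  obtain ⟨p', q', hq', h'⟩ := hg
  refine ⟨p * q' + p' * q, q * q', mul_ne_zero hq hq', ?_⟩
  push_cast
  rw [← h, ← h']; ring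

lemma IsRationalSeries.sub {f g : PowerSeries ℤ} (hf : IsRationalSeries f)
    (hg : IsRationalSeries g) : IsRationalSeries (f - g) := by
  obtain ⟨p, q, hq, h⟩ := hf
  obtain ⟨p', q', hq', h'⟩ := hg
  refine ⟨p * q' - p' * q, q * q', mul_ne_zero hq hq', ?_⟩
  have e : ((p * q' - p' * q : Polynomial ℤ) : PowerSeries ℤ) = p * q' - p' * q := by
    rw [← Polynomial.coe_mul, ← Polynomial.coe_mul]
    exact map_sub (Polynomial.coeToPowerSeries.ringHom (R := ℤ)) _ _
  rw [e]
  push_cast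
  rw [← h, ← h']; ring

lemma IsRationalSeries.X_pow_mul {f : PowerSeries ℤ} (hf : IsRationalSeries f) (c : ℕ) :
    IsRationalSeries (PowerSeries.X ^ c * f) := by
  obtain ⟨p, q, hq, h⟩ := hf
  refine ⟨Polynomial.X ^ c * p, q, hq, ?_⟩
  push_cast
  rw [← h]; ring

lemma IsRationalSeries.of_sub_shift {f : PowerSeries ℤ} {c : ℕ} (hc : 0 < c)
    (hf : IsRationalSeries (f - PowerSeries.X ^ c * f)) : IsRationalSeries f := by
  obtain ⟨p, q, hq, h⟩ := hf
  have e : ((1 - Polynomial.X ^ c : Polynomial ℤ) : PowerSeries ℤ) = 1 - PowerSeries.X ^ c := by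
    have := map_sub (Polynomial.coeToPowerSeries.ringHom (R := ℤ)) 1 (Polynomial.X ^ c)
    simpa using this
  refine ⟨p, (1 - Polynomial.X ^ c) * q, mul_ne_zero ?_ hq, ?_⟩
  · intro h0
    have := congrArg (Polynomial.eval 2) h0
    simp only [Polynomial.eval_sub, Polynomial.eval_one, Polynomial.eval_pow, Polynomial.eval_X,
      Polynomial.eval_zero] at this
    have h2 : (2 : ℤ) ≤ 2 ^ c := by
      calc (2 : ℤ) = 2 ^ 1 := by norm_num
        _ ≤ 2 ^ c := pow_le_pow_right₀ (by norm_num) hc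
    linarith
  · rw [Polynomial.coe_mul, e, ← h]; ring

/-! ### Sets with rational generating function -/

/-- The generating function of a set with respect to a weight function. -/
noncomputable def genFun {α : Type*} (h : α → ℕ) (s : Set α) : PowerSeries ℤ :=
  PowerSeries.mk fun k => ((s ∩ h ⁻¹' {k}).ncard : ℤ)

/-- All fibres are finite and the generating function is rational. -/
def RatSet {α : Type*} (h : α → ℕ) (s : Set α) : Prop :=
  (∀ k, (s ∩ h ⁻¹' {k}).Finite) ∧ IsRationalSeries (genFun h s)

section RatSet
variable {α β : Type*} {h : α → ℕ} {s t : Set α}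

lemma RatSet.empty : RatSet h ∅ := by
  refine ⟨by simp, ?_⟩
  have : genFun h ∅ = 0 := by ext; simp [genFun]
  rw [this]; exact .zero

lemma genFun_union (hs : ∀ k, (s ∩ h ⁻¹' {k}).Finite) (ht : ∀ k, (t ∩ h ⁻¹' {k}).Finite) :
    genFun h (s ∪ t) = genFun h s + genFun h t - genFun h (s ∩ t) := by
  ext k
  simp only [genFun, map_sub, map_add, PowerSeries.coeff_mk]
  have := Set.ncard_union_add_ncard_inter (s ∩ h ⁻¹' {k}) (t ∩ h ⁻¹' {k}) (hs k) (ht k)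
  rw [← Set.union_inter_distrib_right, ← Set.inter_inter_distrib_right] at this
  omega

lemma RatSet.union (hs : RatSet h s) (ht : RatSet h t) (hst : RatSet h (s ∩ t)) :
    RatSet h (s ∪ t) := by
  refine ⟨fun k => ?_, ?_⟩
  · rw [Set.union_inter_distrib_right]; exact (hs.1 k).union (ht.1 k)
  · rw [genFun_union hs.1 ht.1]
    exact (hs.2.add ht.2).sub hst.2

lemma RatSet.union_disjoint (hs : RatSet h s) (ht : RatSet h t) (hst : Disjoint s t) :
    RatSet h (s ∪ t) :=
  hs.union ht (by rw [hst.inter_eq]; exact .empty)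

lemma genFun_sdiff (hs : ∀ k, (s ∩ h ⁻¹' {k}).Finite) (hts : t ⊆ s) :
    genFun h (s \ t) = genFun h s - genFun h t := by
  have ht : ∀ k, (t ∩ h ⁻¹' {k}).Finite :=
    fun k => (hs k).subset (Set.inter_subset_inter_left _ hts)
  have hd : ∀ k, ((s \ t) ∩ h ⁻¹' {k}).Finite :=
    fun k => (hs k).subset (Set.inter_subset_inter_left _ Set.sdiff_subset)
  have := genFun_union hd ht
  rw [Set.sdiff_union_of_subset hts, Set.sdiff_inter_self] at this
  have e : genFun h (∅ : Set α) = 0 := by ext; simp [genFun]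
  rw [this, e]; ring

lemma RatSet.sdiff (hs : RatSet h s) (ht : RatSet h t) (hts : t ⊆ s) : RatSet h (s \ t) := by
  refine ⟨fun k => (hs.1 k).subset (Set.inter_subset_inter_left _ Set.sdiff_subset), ?_⟩
  rw [genFun_sdiff hs.1 hts]
  exact hs.2.sub ht.2

lemma ncard_image_shift {h' : β → ℕ} {f : α → β} (hf : Set.InjOn f s) (c : ℕ)
    (hh : ∀ x ∈ s, h' (f x) = c + h x) (k : ℕ) :
    (f '' s) ∩ h' ⁻¹' {c + k} = f '' (s ∩ h ⁻¹' {k}) := by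
  ext y; constructor
  · rintro ⟨⟨x, hx, rfl⟩, hy⟩
    have := hh x hx
    refine ⟨x, ⟨hx, ?_⟩, rfl⟩
    simp only [Set.mem_preimage, Set.mem_singleton_iff] at hy ⊢
    omega
  · rintro ⟨x, ⟨hx, hk⟩, rfl⟩
    refine ⟨⟨x, hx, rfl⟩, ?_⟩
    simp only [Set.mem_preimage, Set.mem_singleton_iff] at hk ⊢
    rw [hh x hx, hk]

lemma genFun_image {h' : β → ℕ} {f : α → β} (hf : Set.InjOn f s) (c : ℕ)
    (hh : ∀ x ∈ s, h' (f x) = c + h x) :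
    genFun h' (f '' s) = PowerSeries.X ^ c * genFun h s := by
  ext k
  rw [PowerSeries.coeff_X_pow_mul']
  split_ifs with hk
  · obtain ⟨k, rfl⟩ := Nat.exists_eq_add_of_le hk
    simp only [genFun, PowerSeries.coeff_mk, Nat.add_sub_cancel_left]
    rw [ncard_image_shift hf c hh, Set.ncard_image_of_injOn (hf.mono Set.inter_subset_left)]
  · simp only [genFun, PowerSeries.coeff_mk]
    have : (f '' s) ∩ h' ⁻¹' {k} = ∅ := by
      rw [Set.eq_empty_iff_forall_notMem]
      rintro _ ⟨⟨x, hx, rfl⟩, hy⟩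
      have := hh x hx
      simp only [Set.mem_preimage, Set.mem_singleton_iff] at hy
      omega
    rw [this]; simp

lemma RatSet.image {h' : β → ℕ} {f : α → β} (hs : RatSet h s) (hf : Set.InjOn f s) (c : ℕ)
    (hh : ∀ x ∈ s, h' (f x) = c + h x) : RatSet h' (f '' s) := by
  refine ⟨fun k => ?_, ?_⟩
  · by_cases hk : c ≤ k
    · obtain ⟨k, rfl⟩ := Nat.exists_eq_add_of_le hk
      rw [ncard_image_shift hf c hh]
      exact (hs.1 k).image f
    · convert! Set.finite_empty
      rw [Set.eq_empty_iff_forall_notMem]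
      rintro _ ⟨⟨x, hx, rfl⟩, hy⟩
      have := hh x hx
      simp only [Set.mem_preimage, Set.mem_singleton_iff] at hy
      omega
  · rw [genFun_image hf c hh]
    exact hs.2.X_pow_mul c

lemma RatSet.of_image {h' : β → ℕ} {f : α → β} (hf : Set.InjOn f s)
    (hh : ∀ x ∈ s, h' (f x) = h x) (hs : RatSet h' (f '' s)) : RatSet h s := by
  have hh' : ∀ x ∈ s, h' (f x) = 0 + h x := by simpa using hh
  refine ⟨fun k => ?_, ?_⟩
  · have := hs.1 (0 + k)
    rw [ncard_image_shift hf 0 hh'] at this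
    exact this.of_finite_image (hf.mono Set.inter_subset_left)
  · have := hs.2
    rw [genFun_image hf 0 hh'] at this
    simpa using this

lemma RatSet.biUnion_disjoint {ι : Type*} (I : Finset ι) (T : ι → Set α)
    (hT : ∀ i ∈ I, RatSet h (T i)) (hd : ∀ i ∈ I, ∀ j ∈ I, i ≠ j → Disjoint (T i) (T j)) :
    RatSet h (⋃ i ∈ I, T i) := by
  classical
  induction I using Finset.induction_on with
  | empty => simpa using RatSet.empty
  | insert a I ha ih =>
    rw [Finset.set_biUnion_insert]
    refine RatSet.union_disjoint (hT a (by simp)) (ih (fun i hi => hT i (by simp [hi]))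
      (fun i hi j hj => hd i (by simp [hi]) j (by simp [hj]))) ?_
    rw [Set.disjoint_iUnion₂_right]
    intro i hi
    exact hd a (by simp) i (by simp [hi]) (by rintro rfl; exact ha hi)

/-- Inclusion-exclusion. -/
lemma RatSet.biUnion_of_inter {ι : Type*} (𝒢 : Set α → Prop) (h1 : ∀ s, 𝒢 s → RatSet h s)
    (h2 : ∀ s t, 𝒢 s → 𝒢 t → 𝒢 (s ∩ t)) (I : Finset ι) (T : ι → Set α)
    (hT : ∀ i ∈ I, 𝒢 (T i)) : RatSet h (⋃ i ∈ I, T i) := by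
  classical
  induction I using Finset.induction_on generalizing T with
  | empty => simpa using RatSet.empty
  | insert a I ha ih =>
    rw [Finset.set_biUnion_insert]
    refine RatSet.union (h1 _ (hT a (by simp))) (ih T (fun i hi => hT i (by simp [hi]))) ?_
    rw [Set.inter_iUnion₂]
    exact ih (fun i => T a ∩ T i) fun i hi => h2 _ _ (hT a (by simp)) (hT i (by simp [hi]))

end RatSet

lemma RatSet.singleton {α : Type*} {h : α → ℕ} (x : α) : RatSet h {x} := by
  refine ⟨fun k => (Set.finite_singleton x).inter_of_left _, Polynomial.X ^ (h x), 1, one_ne_zero, ?_⟩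
  ext k
  simp only [Polynomial.coe_one, mul_one, genFun, PowerSeries.coeff_mk, Polynomial.coe_pow,
    Polynomial.coe_X, PowerSeries.coeff_X_pow]
  split_ifs with hk
  · have : ({x} : Set α) ∩ h ⁻¹' {k} = {x} := by
      rw [Set.inter_eq_left]; simp [hk]
    rw [this]; simp
  · have : ({x} : Set α) ∩ h ⁻¹' {k} = ∅ := by
      rw [Set.eq_empty_iff_forall_notMem]
      rintro y ⟨hy, hy'⟩
      simp only [Set.mem_preimage, Set.mem_singleton_iff] at hy hy'
      subst hy; exact hk hy'.symm
    rw [this]; simp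

lemma weight_coord_le {r : ℕ} (h : (Fin r → ℕ) →+ ℕ) (hh : ∀ i, 0 < h (Pi.single i 1))
    (x : Fin r → ℕ) (i : Fin r) : x i ≤ h x := by
  classical
  have e : x = Pi.single i (x i) + Function.update x i 0 := by
    ext j
    by_cases hj : j = i
    · subst hj; simp
    · simp [hj]
  have e2 : (Pi.single i (x i) : Fin r → ℕ) = x i • Pi.single i 1 := by
    ext j
    by_cases hj : j = i
    · subst hj; simp
    · simp [hj]
  have : h x = x i * h (Pi.single i 1) + h (Function.update x i 0) := by
    conv_lhs => rw [e]
    rw [map_add, e2, map_nsmul, smul_eq_mul]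
  rw [this]
  have := hh i
  nlinarith

lemma weight_fiber_finite {r : ℕ} (h : (Fin r → ℕ) →+ ℕ) (hh : ∀ i, 0 < h (Pi.single i 1))
    (U : Set (Fin r → ℕ)) (k : ℕ) : (U ∩ h ⁻¹' {k}).Finite := by
  apply (Set.finite_Iic (fun _ : Fin r => k)).subset
  rintro x ⟨-, hx⟩ i
  simp only [Set.mem_preimage, Set.mem_singleton_iff] at hx
  rw [← hx]
  exact weight_coord_le h hh x i

lemma minimal_finite {ι : Type*} [Finite ι] (U : Set (ι → ℕ)) :
    {x | Minimal (· ∈ U) x}.Finite :=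
  (setOfPred_minimal_antichain _).finite_of_partiallyWellOrderedOn
    (Set.isPWO_of_wellQuasiOrderedLE _)

lemma exists_minimal_below {ι : Type*} [Finite ι] (U : Set (ι → ℕ)) (x : ι → ℕ) (hx : x ∈ U) :
    ∃ m ≤ x, Minimal (· ∈ U) m :=
  exists_minimal_le_of_wellFoundedLT (· ∈ U) x hx

/-- Prepending a zero, as an additive homomorphism. -/
def consZero (r : ℕ) : (Fin r → ℕ) →+ (Fin (r + 1) → ℕ) where
  toFun x := Fin.cons 0 x
  map_zero' := by
    ext i; refine Fin.cases ?_ (fun i => ?_) i <;> simp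
  map_add' x y := by
    ext i; refine Fin.cases ?_ (fun i => ?_) i <;> simp

lemma cons_add_single {r : ℕ} (j : ℕ) (y : Fin r → ℕ) :
    (Fin.cons j y : Fin (r + 1) → ℕ) + Pi.single 0 1 = Fin.cons (j + 1) y := by
  ext i; refine Fin.cases ?_ (fun i => ?_) i <;> simp

lemma weight_cons {r : ℕ} (h : (Fin (r + 1) → ℕ) →+ ℕ) (j : ℕ) (y : Fin r → ℕ) :
    h (Fin.cons j y) = j * h (Pi.single 0 1) + h.comp (consZero r) y := by
  induction j with
  | zero => simp [consZero]
  | succ j ih =>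
    rw [← cons_add_single, map_add, ih]; ring

lemma cons_le_cons_iff' {r : ℕ} {i j : ℕ} {x y : Fin r → ℕ} :
    (Fin.cons i x : Fin (r + 1) → ℕ) ≤ Fin.cons j y ↔ i ≤ j ∧ x ≤ y := Fin.cons_le_cons

lemma RatSet.of_isUpperSet {r : ℕ} (h : (Fin r → ℕ) →+ ℕ) (hh : ∀ i, 0 < h (Pi.single i 1))
    (U : Set (Fin r → ℕ)) (hU : IsUpperSet U) : RatSet h U := by
  induction r with
  | zero =>
    rcases U.eq_empty_or_nonempty with rfl | ⟨x, hx⟩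
    · exact .empty
    · have : U = {x} := by
        ext y; constructor
        · intro _; exact Subsingleton.elim _ _
        · rintro rfl; exact hx
      rw [this]; exact .singleton x
  | succ r ih =>
    set h' := h.comp (consZero r) with hh'
    have hpos' : ∀ i, 0 < h' (Pi.single i 1) := by
      intro i
      have : consZero r (Pi.single i 1) = Pi.single i.succ 1 := by
        ext j; refine Fin.cases ?_ (fun j => ?_) j
        · simp [consZero]
        · by_cases hj : j = i
          · subst hj; simp [consZero]
          · simp [consZero, hj]
      rw [hh', AddMonoidHom.comp_apply, this]
      exact hh _
    set w := h (Pi.single 0 1) with hw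
    set W : ℕ → Set (Fin r → ℕ) := fun j => {y | Fin.cons j y ∈ U}
    set V : ℕ → Set (Fin r → ℕ) := fun j => {y | ∃ i < j, Fin.cons i y ∈ U}
    have hWup : ∀ j, IsUpperSet (W j) := fun j x y hxy hx =>
      hU (cons_le_cons_iff'.2 ⟨le_rfl, hxy⟩) hx
    have hVup : ∀ j, IsUpperSet (V j) := by
      rintro j x y hxy ⟨i, hi, hx⟩
      exact ⟨i, hi, hU (cons_le_cons_iff'.2 ⟨le_rfl, hxy⟩) hx⟩
    have hVW : ∀ j, V j ⊆ W j := by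
      rintro j x ⟨i, hi, hx⟩
      exact hU (cons_le_cons_iff'.2 ⟨hi.le, le_rfl⟩) hx
    have hR : ∀ j, RatSet h' (W j \ V j) := fun j =>
      (ih h' hpos' _ (hWup j)).sdiff (ih h' hpos' _ (hVup j)) (hVW j)
    have hinj : ∀ j : ℕ, Function.Injective (fun y : Fin r → ℕ => (Fin.cons j y : Fin (r+1) → ℕ)) :=
      fun j x y hxy => Fin.cons_right_injective (α := fun _ => ℕ) j hxy
    have hR' : ∀ j, RatSet h ((fun y : Fin r → ℕ => (Fin.cons j y : Fin (r+1) → ℕ)) '' (W j \ V j)) :=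
      fun j => (hR j).image (hinj j).injOn (j * w) fun x _ => weight_cons h j x
    obtain ⟨J, hJ⟩ : ∃ J : ℕ, ∀ m, Minimal (· ∈ U) m → m 0 ≤ J := by
      obtain ⟨J, hJ⟩ := ((minimal_finite U).image (fun m => m 0)).bddAbove
      exact ⟨J, fun m hm => hJ ⟨m, hm, rfl⟩⟩
    have hshift : (fun x => x + Pi.single 0 1) '' U ⊆ U := by
      rintro _ ⟨x, hx, rfl⟩
      exact hU (le_self_add) hx
    have key : U \ ((fun x => x + Pi.single 0 1) '' U) = ⋃ j ∈ Finset.range (J + 1),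
        (fun y : Fin r → ℕ => (Fin.cons j y : Fin (r+1) → ℕ)) '' (W j \ V j) := by
      ext x
      simp only [Set.mem_iUnion, Finset.mem_range, exists_prop]
      constructor
      · rintro ⟨hx, hx'⟩
        have hxc : x = Fin.cons (x 0) (Fin.tail x) := (Fin.cons_self_tail x).symm
        have hnV : Fin.tail x ∉ V (x 0) := by
          rintro ⟨i, hi, hiU⟩
          apply hx'
          refine ⟨Fin.cons (x 0 - 1) (Fin.tail x),
            hU (cons_le_cons_iff'.2 ⟨by omega, le_rfl⟩) hiU, ?_⟩
          change (Fin.cons (x 0 - 1) (Fin.tail x) : Fin (r+1) → ℕ) + Pi.single 0 1 = x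
          rw [cons_add_single, show x 0 - 1 + 1 = x 0 by omega, ← hxc]
        refine ⟨x 0, ?_, Fin.tail x, ⟨?_, hnV⟩, hxc.symm⟩
        · by_contra hlt
          obtain ⟨m, hmx, hm⟩ := exists_minimal_below U x hx
          apply hnV
          refine ⟨J, by omega, hU ?_ hm.1⟩
          rw [← Fin.cons_self_tail m]
          exact cons_le_cons_iff'.2 ⟨hJ m hm, fun i => hmx i.succ⟩
        · change Fin.cons _ _ ∈ U
          rwa [← hxc]
      · rintro ⟨j, hj, y, ⟨hyW, hyV⟩, rfl⟩
        refine ⟨hyW, ?_⟩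
        rintro ⟨x, hx, hxy⟩
        change x + Pi.single 0 1 = Fin.cons j y at hxy
        rw [← Fin.cons_self_tail x, cons_add_single] at hxy
        have h0 : x 0 + 1 = j := by simpa using congrFun hxy 0
        have h1 : Fin.tail x = y := by
          ext i; simpa using congrFun hxy i.succ
        apply hyV
        refine ⟨x 0, by omega, ?_⟩
        rw [← h1, Fin.cons_self_tail]; exact hx
    have hfin := weight_fiber_finite h hh U
    refine ⟨hfin, IsRationalSeries.of_sub_shift (c := w) (hh 0) ?_⟩
    rw [← genFun_image (h := h) (h' := h) (f := fun x => x + Pi.single 0 1)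
      (add_left_injective _).injOn w (fun x _ => by simp [add_comm, hw]), ← genFun_sdiff hfin hshift,
      key]
    refine (RatSet.biUnion_disjoint _ _ (fun j _ => hR' j) ?_).2
    intro i _ j _ hij
    rw [Set.disjoint_left]
    rintro _ ⟨x, _, rfl⟩ ⟨y, _, hxy⟩
    exact hij (by simpa using (congrFun hxy 0).symm)

lemma RatSet.translate_sdiff {M : Type*} [AddCommMonoid M] (h : M →+ ℕ) {r : ℕ}
    (φ : (Fin r → ℕ) →+ M) (hφ : ∀ i, 0 < h (φ (Pi.single i 1))) (d : M) (Y : Set M)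
    (hY : ∀ y ∈ Y, ∀ u, y + φ u ∈ Y) :
    RatSet h (Set.range (fun x => d + φ x) \ Y) := by
  set B : Set (Fin r → ℕ) :=
    {x | d + φ x ∈ Y ∨ ∃ x', toLex x' < toLex x ∧ d + φ x' = d + φ x} with hB
  have hBup : IsUpperSet B := by
    intro x z hxz hx
    obtain ⟨u, rfl⟩ := exists_add_of_le hxz
    rcases hx with hx | ⟨x', hlt, heq⟩
    · left
      rw [map_add, ← add_assoc]
      exact hY _ hx u
    · right
      refine ⟨x' + u, ?_, ?_⟩
      · rw [toLex_add, toLex_add]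
        exact add_lt_add_left hlt _
      · rw [map_add, map_add, ← add_assoc, heq, add_assoc]
  have huniv : RatSet (h.comp φ) (Set.univ : Set (Fin r → ℕ)) :=
    RatSet.of_isUpperSet _ hφ _ isUpperSet_univ
  have hBc := huniv.sdiff (RatSet.of_isUpperSet (h.comp φ) hφ B hBup) (Set.subset_univ _)
  have hinj : Set.InjOn (fun x => d + φ x) (Set.univ \ B) := by
    intro x hx y hy hxy
    rcases lt_trichotomy (toLex x) (toLex y) with hlt | heq | hlt
    · exact absurd (Or.inr ⟨x, hlt, hxy⟩) hy.2
    · exact toLex.injective heq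
    · exact absurd (Or.inr ⟨y, hlt, hxy.symm⟩) hx.2
  have := hBc.image (h' := h) hinj (h d) (fun x _ => by simp)
  convert! this using 1
  ext y
  constructor
  · rintro ⟨⟨x, rfl⟩, hy⟩
    obtain ⟨m, hm, hmin⟩ := WellFounded.has_min (wellFounded_lt (α := Lex (Fin r → ℕ)))
      {z | d + φ (ofLex z) = d + φ x} ⟨toLex x, rfl⟩
    refine ⟨ofLex m, ⟨trivial, ?_⟩, hm⟩
    have hm' : d + φ (ofLex m) = d + φ x := hm
    rintro (h1 | ⟨x', hlt, heq⟩)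
    · rw [hm'] at h1; exact hy h1
    · exact hmin (toLex x') (heq.trans hm') hlt
  · rintro ⟨x, ⟨-, hx⟩, rfl⟩
    exact ⟨⟨x, rfl⟩, fun h1 => hx (Or.inl h1)⟩

/-- Finite unions of translates of one finitely generated submonoid, with positive weights. -/
def GoodSet {M : Type*} [AddCommMonoid M] (h : M →+ ℕ) (Y : Set M) : Prop :=
  ∃ (Q : AddSubmonoid M) (E : Set M), Q.FG ∧ E.Finite ∧ (∀ q ∈ Q, q ≠ 0 → 0 < h q) ∧
    Y = {y | ∃ e ∈ E, ∃ q ∈ Q, e + q = y}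

lemma exists_param {M : Type*} [AddCommMonoid M] (Q : AddSubmonoid M) (hQ : Q.FG) :
    ∃ (r : ℕ) (φ : (Fin r → ℕ) →+ M), (∀ i, φ (Pi.single i 1) ≠ 0) ∧
      ∀ q, q ∈ Q ↔ ∃ x, φ x = q := by
  classical
  obtain ⟨t, rfl⟩ := hQ
  set s := t.erase 0 with hs
  set f : Fin s.card → M := fun i => (s.equivFin.symm i : M) with hf
  have hrange : Set.range f = (t : Set M) \ {0} := by
    have : Set.range f = (s : Set M) := by
      ext x; constructor
      · rintro ⟨i, rfl⟩; exact (s.equivFin.symm i).2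
      · intro hx; exact ⟨s.equivFin ⟨x, hx⟩, by simp [hf]⟩
    rw [this, hs, Finset.coe_erase]
  refine ⟨s.card, (Fintype.linearCombination ℕ f).toAddMonoidHom, ?_, ?_⟩
  · intro i
    have hi : f i ∈ Set.range f := ⟨i, rfl⟩
    rw [hrange] at hi
    have e : (Fintype.linearCombination ℕ f).toAddMonoidHom (Pi.single i 1) = f i := by
      simp [Fintype.linearCombination_apply_single]
    rw [e]; exact hi.2
  · intro q
    rw [← AddSubmonoid.closure_sdiff_singleton_zero, ← hrange,
      AddSubmonoid.mem_closure_range_iff_of_fintype]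
    constructor
    · rintro ⟨a, ha⟩; exact ⟨a, by simp [Fintype.linearCombination_apply, ← ha]⟩
    · rintro ⟨a, ha⟩; exact ⟨a, by simpa [Fintype.linearCombination_apply] using ha.symm⟩

lemma GoodSet.ratSet {M : Type*} [AddCommMonoid M] {h : M →+ ℕ} {Y : Set M} (hY : GoodSet h Y) :
    RatSet h Y := by
  obtain ⟨Q, E, hQ, hE, hpos, rfl⟩ := hY
  obtain ⟨r, φ, hφ, hmem⟩ := exists_param Q hQ
  induction E, hE using Set.Finite.induction_on with
  | empty => convert! RatSet.empty using 1; ext; simp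
  | @insert d E _ _ ih =>
    have h1 := RatSet.translate_sdiff h φ (fun i => hpos _ ((hmem _).2 ⟨_, rfl⟩) (hφ i)) d
      {y | ∃ e ∈ E, ∃ q ∈ Q, e + q = y} (by
        rintro _ ⟨e, he, q, hq, rfl⟩ u
        exact ⟨e, he, q + φ u, Q.add_mem hq ((hmem _).2 ⟨_, rfl⟩), (add_assoc _ _ _).symm⟩)
    convert! ih.union_disjoint h1 Set.disjoint_sdiff_right using 1
    rw [Set.union_sdiff_self]
    ext y
    constructor
    · rintro ⟨e, he, q, hq, rfl⟩
      rcases he with rfl | he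
      · right
        obtain ⟨x, rfl⟩ := (hmem _).1 hq
        exact ⟨x, rfl⟩
      · left; exact ⟨e, he, q, hq, rfl⟩
    · rintro (⟨e, he, q, hq, rfl⟩ | ⟨x, rfl⟩)
      · exact ⟨e, Or.inr he, q, hq, rfl⟩
      · exact ⟨d, Or.inl rfl, φ x, (hmem _).2 ⟨_, rfl⟩, rfl⟩

lemma GoodSet.inter {M : Type*} [AddCommMonoid M] [IsCancelAdd M] {h : M →+ ℕ} {Y Y' : Set M}
    (hY : GoodSet h Y) (hY' : GoodSet h Y') : GoodSet h (Y ∩ Y') := by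
  obtain ⟨Q, E, hQ, hE, hpos, rfl⟩ := hY
  obtain ⟨Q', E', hQ', hE', hpos', rfl⟩ := hY'
  obtain ⟨r, φ, hφ, hmem⟩ := exists_param Q hQ
  obtain ⟨r', φ', hφ', hmem'⟩ := exists_param Q' hQ'
  set a : (Fin r ⊕ Fin r' → ℕ) →+ M :=
    φ.comp (LinearMap.funLeft ℕ ℕ Sum.inl).toAddMonoidHom with ha
  set b : (Fin r ⊕ Fin r' → ℕ) →+ M :=
    φ'.comp (LinearMap.funLeft ℕ ℕ Sum.inr).toAddMonoidHom with hb
  have haQ : ∀ z, a z ∈ Q := fun z => (hmem _).2 ⟨_, rfl⟩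
  have hbQ : ∀ z, b z ∈ Q' := fun z => (hmem' _).2 ⟨_, rfl⟩
  set D : M → M → Set (Fin r ⊕ Fin r' → ℕ) := fun e e' => {z | e + a z = e' + b z}
  refine ⟨(a.eqLocusM b).map a, ⋃ e ∈ E, ⋃ e' ∈ E', (fun z => e + a z) '' {z | Minimal (· ∈ D e e') z},
    (AddSubmonoid.fg_eqLocusM a b).map a,
    hE.biUnion fun e _ => hE'.biUnion fun e' _ => (minimal_finite _).image _, ?_, ?_⟩
  · rintro _ ⟨z, -, rfl⟩ hne
    exact hpos _ (haQ z) hne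
  · ext y
    constructor
    · rintro ⟨⟨e, he, q, hq, rfl⟩, ⟨e', he', q', hq', heq⟩⟩
      obtain ⟨u, rfl⟩ := (hmem _).1 hq
      obtain ⟨v, rfl⟩ := (hmem' _).1 hq'
      have hz : Sum.elim u v ∈ D e e' := heq.symm
      have hau : a (Sum.elim u v) = φ u := rfl
      have hbv : b (Sum.elim u v) = φ' v := rfl
      obtain ⟨m, hle, hm⟩ := exists_minimal_below _ _ hz
      obtain ⟨k, hk⟩ := exists_add_of_le hle
      have hab : a k = b k := by
        have h1 : e + a (Sum.elim u v) = e' + b (Sum.elim u v) := hz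
        have h2 : e + a m = e' + b m := hm.1
        rw [hk, map_add, map_add, ← add_assoc, ← add_assoc, h2] at h1
        exact add_left_cancel h1
      refine ⟨e + a m, ?_, a k, ⟨k, hab, rfl⟩, ?_⟩
      · simp only [Set.mem_iUnion, exists_prop]
        exact ⟨e, he, e', he', m, hm, rfl⟩
      · rw [← hau, hk, map_add, add_assoc]
    · rintro ⟨f, hf, _, ⟨k, hab, rfl⟩, rfl⟩
      simp only [Set.mem_iUnion, exists_prop] at hf
      obtain ⟨e, he, e', he', m, hm, rfl⟩ := hf
      have h2 : e + a m = e' + b m := hm.1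
      have hab' : a k = b k := hab
      refine ⟨⟨e, he, a m + a k, Q.add_mem (haQ _) (haQ _), (add_assoc _ _ _).symm⟩,
        ⟨e', he', b m + b k, Q'.add_mem (hbQ _) (hbQ _), ?_⟩⟩
      change e' + (b m + b k) = e + a m + a k
      rw [h2, hab', add_assoc]

lemma IsProperLinearSet.goodSet {M : Type*} [AddCommMonoid M] [IsCancelAdd M] {h : M →+ ℕ}
    {Y : Set M} (hY : IsProperLinearSet Y) (hfin : ∀ k, (Y ∩ h ⁻¹' {k}).Finite) : GoodSet h Y := by
  obtain ⟨c, t, ht, hli, rfl⟩ := hY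
  have hpt : ∀ p ∈ t, 0 < h p := by
    intro p hp
    by_contra h0
    have h0 : h p = 0 := by omega
    have hinj : Function.Injective (fun n : ℕ => c + n • p) := by
      intro n m hnm
      have h1 : n • p = m • p := add_left_cancel hnm
      have h2 := @hli (Finsupp.single ⟨p, hp⟩ n) (Finsupp.single ⟨p, hp⟩ m) (by
        simpa [Finsupp.linearCombination_single] using h1)
      simpa using congrArg (fun g => g ⟨p, hp⟩) h2
    refine Set.infinite_range_of_injective hinj ((hfin (h c)).subset ?_)
    rintro _ ⟨n, rfl⟩
    refine ⟨⟨n • p, ?_, rfl⟩, ?_⟩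
    · exact AddSubmonoid.nsmul_mem _ (AddSubmonoid.subset_closure hp) n
    · simp [h0]
  refine ⟨AddSubmonoid.closure t, {c}, ⟨ht.toFinset, by simp⟩, Set.finite_singleton c, ?_, ?_⟩
  · intro q hq
    induction hq using AddSubmonoid.closure_induction with
    | mem x hx => exact fun _ => hpt x hx
    | zero => exact fun h => absurd rfl h
    | add x y _ _ hx hy =>
      intro hxy
      rw [map_add]
      by_cases h0 : x = 0
      · subst h0
        have := hy (by simpa using hxy)
        omega
      · have := hx h0
        omega
  · ext y
    simp [Set.mem_vadd_set]

lemma IsSemilinearSet.ratSet {M : Type*} [AddCommMonoid M] [IsCancelAdd M] {h : M →+ ℕ}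
    {X : Set M} (hX : IsSemilinearSet X) (hfin : ∀ k, (X ∩ h ⁻¹' {k}).Finite) : RatSet h X := by
  obtain ⟨T, hT, rfl⟩ := isProperSemilinearSet_iff.1 hX.isProperSemilinearSet
  have := RatSet.biUnion_of_inter (h := h) (GoodSet h) (fun _ hs => hs.ratSet)
    (fun _ _ hs ht => hs.inter ht) T id (fun t ht => (hT t ht).goodSet fun k =>
      (hfin k).subset (Set.inter_subset_inter_left _ (Set.subset_sUnion_of_mem ht)))
  rw [Set.sUnion_eq_biUnion]
  simpa using this

/-! ### Commutative Kleene theorem -/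

/-- Labels of nonempty paths from `p` to `q` all of whose inner vertices lie in `T`. -/
inductive PathIn {Q M : Type*} [AddCommMonoid M] (B : Q → Q → Set M) (T : Finset Q) :
    Q → Q → M → Prop
  | edge {p q : Q} {b : M} (hb : b ∈ B p q) : PathIn B T p q b
  | trans {p x q : Q} {m m' : M} (hx : x ∈ T) (h₁ : PathIn B T p x m) (h₂ : PathIn B T x q m') :
      PathIn B T p q (m + m')

section Kleene
variable {Q M : Type*} [AddCommMonoid M] {B : Q → Q → Set M}

lemma PathIn.mono {T T' : Finset Q} (hT : T ⊆ T') {p q : Q} {m : M} (h : PathIn B T p q m) :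
    PathIn B T' p q m := by
  induction h with
  | edge hb => exact .edge hb
  | trans hx _ _ h₁ h₂ => exact .trans (hT hx) h₁ h₂

lemma pathIn_insert [DecidableEq Q] {T : Finset Q} {r p q : Q} {m : M} :
    PathIn B (insert r T) p q m ↔ PathIn B T p q m ∨
      ∃ m₁ m₂ m₃, PathIn B T p r m₁ ∧ m₂ ∈ AddSubmonoid.closure {x | PathIn B T r r x} ∧
        PathIn B T r q m₃ ∧ m = m₁ + m₂ + m₃ := by
  constructor
  · intro h
    induction h with
    | edge hb => exact Or.inl (.edge hb)
    | @trans p x q m m' hx _ _ ih₁ ih₂ =>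
      by_cases hxT : x ∈ T
      · rcases ih₁ with h | ⟨a₁, a₂, a₃, h₁, h₂, h₃, rfl⟩ <;>
        rcases ih₂ with h' | ⟨b₁, b₂, b₃, h₁', h₂', h₃', rfl⟩
        · exact Or.inl (.trans hxT h h')
        · exact Or.inr ⟨m + b₁, b₂, b₃, .trans hxT h h₁', h₂', h₃', by abel⟩
        · exact Or.inr ⟨a₁, a₂, a₃ + m', h₁, h₂, .trans hxT h₃ h', by abel⟩
        · exact Or.inr ⟨a₁, a₂ + (a₃ + b₁) + b₂, b₃, h₁, add_mem (add_mem h₂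
            (AddSubmonoid.subset_closure (PathIn.trans hxT h₃ h₁'))) h₂', h₃', by abel⟩
      · obtain rfl : x = r := by simpa [hxT] using hx
        rcases ih₁ with h | ⟨a₁, a₂, a₃, h₁, h₂, h₃, rfl⟩ <;>
        rcases ih₂ with h' | ⟨b₁, b₂, b₃, h₁', h₂', h₃', rfl⟩
        · exact Or.inr ⟨m, 0, m', h, zero_mem _, h', by abel⟩
        · exact Or.inr ⟨m, b₁ + b₂, b₃, h, add_mem (AddSubmonoid.subset_closure h₁') h₂', h₃',
            by abel⟩
        · exact Or.inr ⟨a₁, a₂ + a₃, m', h₁, add_mem h₂ (AddSubmonoid.subset_closure h₃), h',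
            by abel⟩
        · exact Or.inr ⟨a₁, a₂ + a₃ + (b₁ + b₂), b₃, h₁, add_mem (add_mem h₂
            (AddSubmonoid.subset_closure h₃)) (add_mem (AddSubmonoid.subset_closure h₁') h₂'),
            h₃', by abel⟩
  · have hsub : T ⊆ insert r T := Finset.subset_insert r T
    have hr : r ∈ insert r T := Finset.mem_insert_self r T
    rintro (h | ⟨m₁, m₂, m₃, h₁, h₂, h₃, rfl⟩)
    · exact h.mono hsub
    · refine .trans hr ?_ (h₃.mono hsub)
      have : ∀ m₁, PathIn B (insert r T) p r m₁ → PathIn B (insert r T) p r (m₁ + m₂) := by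
        clear h₁ m₁
        induction h₂ using AddSubmonoid.closure_induction with
        | mem x hx => exact fun m₁ h => .trans hr h (PathIn.mono hsub hx)
        | zero => intro m₁ h; simpa using h
        | add x y _ _ hx hy =>
          intro m₁ h
          rw [← add_assoc]
          exact hy _ (hx _ h)
      exact this m₁ (h₁.mono hsub)

open Pointwise in
lemma isSemilinearSet_pathIn (hB : ∀ p q, IsSemilinearSet (B p q)) (T : Finset Q) (p q : Q) :
    IsSemilinearSet {m | PathIn B T p q m} := by
  classical
  induction T using Finset.induction_on generalizing p q with
  | empty =>
    convert! hB p q using 1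
    ext m
    constructor
    · intro h
      cases h with
      | edge hb => exact hb
      | trans hx _ _ => simp at hx
    · exact fun h => .edge h
  | insert r T _ ih =>
    convert! (ih p q).union (((ih p r).add (ih r r).closure).add (ih r q)) using 1
    ext m
    refine pathIn_insert.trans (or_congr Iff.rfl ?_)
    constructor
    · rintro ⟨m₁, m₂, m₃, h₁, h₂, h₃, rfl⟩
      exact ⟨m₁ + m₂, ⟨m₁, h₁, m₂, h₂, rfl⟩, m₃, h₃, rfl⟩
    · rintro ⟨_, ⟨m₁, h₁, m₂, h₂, rfl⟩, m₃, h₃, rfl⟩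
      exact ⟨m₁, m₂, m₃, h₁, h₂, h₃, rfl⟩

end Kleene
/-! ### Word problem bookkeeping -/

section Words
variable {G : Type*} [Group G]

lemma cosetWeight_le (S : Set G) (ω : G → ℕ) (F : Subgroup G) (l : List G) (hl : ∀ x ∈ l, x ∈ S) :
    cosetWeight S ω F (Quotient.mk _ l.prod) ≤ (l.map ω).sum := by
  have h1 : wordWeight S ω l.prod ≤ (l.map ω).sum := Nat.sInf_le ⟨l, hl, rfl, rfl⟩
  have h2 : cosetWeight S ω F (Quotient.mk _ l.prod) ≤ wordWeight S ω l.prod :=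
    Nat.sInf_le ⟨l.prod, rfl, rfl⟩
  exact h2.trans h1

lemma exists_word_cosetWeight (S : Set G) (hS : Submonoid.closure S = ⊤) (ω : G → ℕ)
    (F : Subgroup G) (C : Quotient (QuotientGroup.rightRel F)) :
    ∃ l : List G, (∀ x ∈ l, x ∈ S) ∧ Quotient.mk _ l.prod = C ∧
      (l.map ω).sum = cosetWeight S ω F C := by
  obtain ⟨g, hg, hgw⟩ := Nat.sInf_mem
    (s := {n | ∃ g : G, Quotient.mk (QuotientGroup.rightRel F) g = C ∧ wordWeight S ω g = n}) (by
      obtain ⟨g, rfl⟩ := Quotient.exists_rep C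
      exact ⟨_, g, rfl, rfl⟩)
  obtain ⟨l, hl, hlg, hlw⟩ := Nat.sInf_mem
    (s := {n | ∃ l : List G, (∀ x ∈ l, x ∈ S) ∧ l.prod = g ∧ (l.map ω).sum = n}) (by
      obtain ⟨l, hl, hlg⟩ := Submonoid.exists_list_of_mem_closure
        (show g ∈ Submonoid.closure S by rw [hS]; trivial)
      exact ⟨_, l, hl, hlg, rfl⟩)
  exact ⟨l, hl, by rw [hlg, hg], hlw.trans hgw⟩

lemma finite_words (S : Finset G) (ω : G → ℕ) (hω : ∀ s ∈ S, 0 < ω s) (k : ℕ) :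
    {l : List G | (∀ x ∈ l, x ∈ S) ∧ (l.map ω).sum = k}.Finite := by
  have h1 := (List.finite_length_le (↥S) k).image (List.map Subtype.val)
  refine h1.subset ?_
  rintro l ⟨hl, hk⟩
  refine ⟨l.attachWith _ hl, ?_, by simp⟩
  change (l.attachWith _ hl).length ≤ k
  rw [List.length_attachWith, ← hk]
  clear hk h1 k
  induction l with
  | nil => simp
  | cons a l ih =>
    have := hω a (hl a (by simp))
    have := ih (fun x hx => hl x (by simp [hx]))
    simp only [List.length_cons, List.map_cons, List.sum_cons]
    omega

end Words
/-- Abstract form: `state` and `val` describe the right cosets of `F`. -/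
lemma abstract_main {G : Type*} [Group G] {Q A : Type*} [Finite Q] [AddCommGroup A]
    (S : Finset G) (hS : Submonoid.closure (S : Set G) = ⊤)
    (ω : G → ℕ) (hω : ∀ s ∈ S, 0 < ω s) (F : Subgroup G)
    (state : G → Q) (val : G → A) (nxt : Q → G → Q) (lab : Q → G → A)
    (hstate : ∀ g s, state (g * s) = nxt (state g) s)
    (hval : ∀ g s, val (g * s) = val g + lab (state g) s)
    (hcos : ∀ g g', (QuotientGroup.rightRel F) g g' ↔ state g = state g' ∧ val g = val g') :
    RatSet (cosetWeight (S : Set G) ω F) Set.univ := by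
  classical
  have := Fintype.ofFinite Q
  set B : Q → Q → Set (A × ℕ) :=
    fun p q => (fun s => (lab p s, ω s)) '' {s | s ∈ S ∧ nxt p s = q} with hB
  have hBs : ∀ p q, IsSemilinearSet (B p q) := fun p q =>
    IsSemilinearSet.of_finite ((S.finite_toSet.subset fun s hs => hs.1).image _)
  set L : Q → Set (A × ℕ) := fun q => {x | ∃ l : List G, (∀ s ∈ l, s ∈ S) ∧
    state l.prod = q ∧ val l.prod = x.1 ∧ (l.map ω).sum = x.2} with hL
  -- paths give words
  have path_word : ∀ p q m, PathIn B Finset.univ p q m → ∀ g, state g = p →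
      ∃ l : List G, (∀ s ∈ l, s ∈ S) ∧ state (g * l.prod) = q ∧ val (g * l.prod) = val g + m.1 ∧
        (l.map ω).sum = m.2 := by
    intro p q m hm
    induction hm with
    | edge hb =>
      rintro g rfl
      obtain ⟨s, ⟨hs, rfl⟩, rfl⟩ := hb
      exact ⟨[s], by simpa using hs, by simp [hstate], by simp [hval], by simp⟩
    | trans _ _ _ ih₁ ih₂ =>
      intro g hg
      obtain ⟨l₁, h₁, hs₁, hv₁, hw₁⟩ := ih₁ g hg
      obtain ⟨l₂, h₂, hs₂, hv₂, hw₂⟩ := ih₂ _ hs₁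
      refine ⟨l₁ ++ l₂, ?_, ?_, ?_, ?_⟩
      · intro s hs
        rcases List.mem_append.1 hs with hs | hs
        · exact h₁ s hs
        · exact h₂ s hs
      · rw [List.prod_append, ← mul_assoc, hs₂]
      · rw [List.prod_append, ← mul_assoc, hv₂, hv₁, Prod.fst_add, add_assoc]
      · rw [List.map_append, List.sum_append, hw₁, hw₂, Prod.snd_add]
  -- words give paths
  have word_path : ∀ l : List G, (∀ s ∈ l, s ∈ S) → l ≠ [] → ∀ g,
      ∃ m : A × ℕ, PathIn B Finset.univ (state g) (state (g * l.prod)) m ∧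
        val (g * l.prod) = val g + m.1 ∧ (l.map ω).sum = m.2 := by
    intro l
    induction l with
    | nil => intro _ h; exact absurd rfl h
    | cons s l ih =>
      intro hl _ g
      have hs : s ∈ S := hl s (by simp)
      have hedge : PathIn B Finset.univ (state g) (state (g * s)) (lab (state g) s, ω s) :=
        .edge ⟨s, ⟨hs, (hstate g s).symm⟩, rfl⟩
      by_cases hnil : l = []
      · subst hnil
        exact ⟨_, by simpa using hedge, by simp [hval], by simp⟩
      · obtain ⟨m, hm, hv, hw⟩ := ih (fun x hx => hl x (by simp [hx])) hnil (g * s)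
        refine ⟨(lab (state g) s, ω s) + m, ?_, ?_, ?_⟩
        · rw [List.prod_cons, ← mul_assoc]
          exact .trans (Finset.mem_univ _) hedge hm
        · rw [List.prod_cons, ← mul_assoc, hv, hval, Prod.fst_add, add_assoc]
        · simp [hw]
  open Pointwise in
  have hLs : ∀ q, IsSemilinearSet (L q) := by
    intro q
    set x₀ : A × ℕ := (val 1, 0) with hx₀
    have h1 : IsSemilinearSet ({m | m = x₀ ∧ state 1 = q}) := by
      apply IsSemilinearSet.of_finite
      exact (Set.finite_singleton x₀).subset fun x hx => hx.1
    convert! h1.union ((isSemilinearSet_pathIn hBs Finset.univ (state 1) q).vadd x₀) using 1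
    ext x
    constructor
    · rintro ⟨l, hl, hs, hv, hw⟩
      by_cases hnil : l = []
      · subst hnil
        left
        refine ⟨?_, by simpa using hs⟩
        ext
        · simpa using hv.symm
        · simpa using hw.symm
      · right
        obtain ⟨m, hm, hv', hw'⟩ := word_path l hl hnil 1
        rw [one_mul] at hm hv'
        rw [hs] at hm
        refine ⟨m, hm, ?_⟩
        ext
        · simp [hx₀, ← hv', hv]
        · simp [hx₀, ← hw', hw]
    · rintro (⟨rfl, hq⟩ | ⟨m, hm, rfl⟩)
      · exact ⟨[], by simp, by simpa using hq, by simp [hx₀], by simp [hx₀]⟩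
      · obtain ⟨l, hl, hs, hv, hw⟩ := path_word _ _ _ hm 1 rfl
        rw [one_mul] at hs hv
        exact ⟨l, hl, hs, by simp [hx₀, hv], by simp [hx₀, hw]⟩
  set X : Q → Set (A × ℕ) := fun q => {x | x ∈ L q ∧ ∀ w, (x.1, w) ∈ L q → x.2 ≤ w} with hX
  open Pointwise in
  have hXs : ∀ q, IsSemilinearSet (X q) := by
    intro q
    have h1 : IsLinearSet (((0, 1) : A × ℕ) +ᵥ
      (AddSubmonoid.closure {((0, 1) : A × ℕ)} : Set (A × ℕ))) := ⟨_, _, Set.finite_singleton _, rfl⟩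
    convert! (hLs q).sdiff ((hLs q).add h1.isSemilinearSet) using 1
    ext x
    refine and_congr Iff.rfl ?_
    constructor
    · rintro h ⟨y, hy, _, ⟨z, hz, rfl⟩, rfl⟩
      obtain ⟨j, rfl⟩ := AddSubmonoid.mem_closure_singleton.1 hz
      have := h y.2 (by simpa using hy)
      simp at this
    · intro h w hw
      by_contra hlt
      push Not at hlt
      apply h
      refine ⟨(x.1, w), hw, _, ⟨(x.2 - w - 1) • (0, 1),
        AddSubmonoid.mem_closure_singleton.2 ⟨_, rfl⟩, rfl⟩, ?_⟩
      ext
      · simp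
      · simp; omega
  have hLfin : ∀ q k, (L q ∩ Prod.snd ⁻¹' {k}).Finite := by
    intro q k
    refine ((finite_words S ω hω k).image fun l => (val l.prod, (l.map ω).sum)).subset ?_
    rintro x ⟨⟨l, hl, hs, hv, hw⟩, hk⟩
    refine ⟨l, ⟨hl, hw.trans hk⟩, ?_⟩
    ext
    · exact hv
    · exact hw
  have hXr : ∀ q, RatSet (AddMonoidHom.snd A ℕ) (X q) := fun q =>
    (hXs q).ratSet fun k => (hLfin q k).subset (Set.inter_subset_inter_left _ fun x hx => hx.1)
  -- transport to cosets
  let stateC : Quotient (QuotientGroup.rightRel F) → Q :=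
    Quotient.lift state fun a b h => ((hcos a b).1 h).1
  let valC : Quotient (QuotientGroup.rightRel F) → A :=
    Quotient.lift val fun a b h => ((hcos a b).1 h).2
  have hsep : ∀ C C', stateC C = stateC C' → valC C = valC C' → C = C' := by
    intro C C'
    induction C using Quotient.inductionOn
    induction C' using Quotient.inductionOn
    intro h1 h2
    exact Quotient.sound ((hcos _ _).2 ⟨h1, h2⟩)
  have hpart : ∀ q, RatSet (cosetWeight (S : Set G) ω F) {C | stateC C = q} := by
    intro q
    refine RatSet.of_image (h' := AddMonoidHom.snd A ℕ)
      (f := fun C => (valC C, cosetWeight (S : Set G) ω F C)) ?_ (fun x _ => rfl) ?_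
    · intro C hC C' hC' heq
      exact hsep _ _ (hC.trans hC'.symm) (congrArg Prod.fst heq)
    · convert! hXr q using 1
      ext x
      constructor
      · rintro ⟨C, hC, rfl⟩
        obtain ⟨l, hl, hlC, hlw⟩ := exists_word_cosetWeight (S : Set G) hS ω F C
        subst hlC
        refine ⟨⟨l, hl, hC, rfl, hlw⟩, ?_⟩
        rintro w ⟨l', hl', hs', hv', hw'⟩
        have : (Quotient.mk (QuotientGroup.rightRel F) l'.prod) = Quotient.mk _ l.prod :=
          hsep _ _ (hs'.trans hC.symm) hv'
        change cosetWeight (S : Set G) ω F (Quotient.mk _ l.prod) ≤ w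
        rw [← this]
        exact (cosetWeight_le (S : Set G) ω F l' hl').trans hw'.le
      · rintro ⟨⟨l, hl, hs, hv, hw⟩, hmin⟩
        refine ⟨Quotient.mk _ l.prod, hs, ?_⟩
        ext
        · exact hv
        · change cosetWeight (S : Set G) ω F (Quotient.mk _ l.prod) = x.2
          refine le_antisymm ((cosetWeight_le (S : Set G) ω F l hl).trans hw.le) ?_
          obtain ⟨l', hl', hlC', hlw'⟩ := exists_word_cosetWeight (S : Set G) hS ω F
            (Quotient.mk _ l.prod)
          refine hmin _ ⟨l', hl', ?_, ?_, hlw'⟩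
          · exact (congrArg stateC hlC').trans hs
          · exact (congrArg valC hlC').trans hv
  have := RatSet.biUnion_disjoint (h := cosetWeight (S : Set G) ω F) (Finset.univ : Finset Q)
    (fun q => {C | stateC C = q}) (fun q _ => hpart q) (by
      intro i _ j _ hij
      rw [Set.disjoint_left]
      rintro C hC hC'
      exact hij (hC.symm.trans hC'))
  convert! this using 1
  ext C; simp

/-- The coset growth series of a subgroup contained in the finite-index free abelian
normal subgroup of a finitely generated virtually abelian group is rational, for any
finite weighted monoid generating set. -/
theorem coset_growth_series_rational_abelian_subgroup {G : Type*} [Group G]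
    (n : ℕ) (N : Subgroup G) (hN : N.Normal) (hNfin : N.FiniteIndex)
    (hNiso : Nonempty (N ≃* Multiplicative (Fin n → ℤ)))
    (S : Finset G) (hS : Submonoid.closure (S : Set G) = ⊤)
    (ω : G → ℕ) (hω : ∀ s ∈ S, 0 < ω s)
    (F : Subgroup G) (hF : F ≤ N) :
    IsRationalSeries (PowerSeries.mk fun k =>
      (Nat.card {C : Quotient (QuotientGroup.rightRel F) //
        cosetWeight (S : Set G) ω F C = k} : ℤ)) := by
  obtain ⟨e⟩ := hNiso
  let F' : AddSubgroup (Fin n → ℤ) :=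
    { carrier := {v | ((e.symm (Multiplicative.ofAdd v) : N) : G) ∈ F}
      zero_mem' := by simp [F.one_mem]
      add_mem' := by
        intro a b ha hb
        change ((e.symm (Multiplicative.ofAdd (a + b)) : N) : G) ∈ F
        rw [ofAdd_add, map_mul, Subgroup.coe_mul]
        exact F.mul_mem ha hb
      neg_mem' := by
        intro a ha
        change ((e.symm (Multiplicative.ofAdd (-a)) : N) : G) ∈ F
        rw [ofAdd_neg, map_inv, Subgroup.coe_inv]
        exact F.inv_mem ha }
  let π : N → (Fin n → ℤ) ⧸ F' := fun x => QuotientAddGroup.mk (Multiplicative.toAdd (e x))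
  have hπmul : ∀ x y, π (x * y) = π x + π y := by
    intro x y
    change QuotientAddGroup.mk (Multiplicative.toAdd (e (x * y))) = _
    rw [map_mul, toAdd_mul]
    rfl
  have hπ : ∀ x y : N, π x = π y ↔ (x : G)⁻¹ * y ∈ F := by
    intro x y
    refine QuotientAddGroup.eq.trans ?_
    change ((e.symm (Multiplicative.ofAdd (-Multiplicative.toAdd (e x) +
      Multiplicative.toAdd (e y))) : N) : G) ∈ F ↔ _
    rw [ofAdd_add, ofAdd_neg, ofAdd_toAdd, ofAdd_toAdd, map_mul, map_inv, e.symm_apply_apply,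
      e.symm_apply_apply, Subgroup.coe_mul, Subgroup.coe_inv]
  have hcomm : ∀ x y : N, x * y = y * x := by
    intro x y
    apply e.injective
    rw [map_mul, map_mul, mul_comm]
  let t : G ⧸ N → G := Quotient.out
  have ht : ∀ q : G ⧸ N, ((t q : G) : G ⧸ N) = q := fun q => Quotient.out_eq q
  have hmem : ∀ a b : G, (a : G ⧸ N) = b → a * b⁻¹ ∈ N := by
    intro a b h
    rw [← QuotientGroup.eq_one_iff, QuotientGroup.mk_mul, QuotientGroup.mk_inv, h, mul_inv_cancel]
  let val : G → (Fin n → ℤ) ⧸ F' := fun g => π ⟨g * (t (g : G ⧸ N))⁻¹, hmem _ _ (ht _).symm⟩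
  let lab : G ⧸ N → G → (Fin n → ℤ) ⧸ F' := fun q s =>
    π ⟨t q * s * (t (q * (s : G ⧸ N)))⁻¹, hmem _ _ (by rw [ht, QuotientGroup.mk_mul, ht])⟩
  have hrat := abstract_main S hS ω hω F (fun g => (g : G ⧸ N)) val (fun q s => q * (s : G ⧸ N)) lab
    (fun g s => rfl)
    (by
      intro g s
      rw [← hπmul]
      refine congrArg π (Subtype.ext ?_)
      change g * s * (t ((g * s : G) : G ⧸ N))⁻¹ =
        g * (t (g : G ⧸ N))⁻¹ * (t (g : G ⧸ N) * s * (t ((g * s : G) : G ⧸ N))⁻¹)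
      group)
    (by
      intro g g'
      rw [QuotientGroup.rightRel_apply]
      have key : ∀ h : (g : G ⧸ N) = g', (val g = val g' ↔ g' * g⁻¹ ∈ F) := by
        intro h
        refine (hπ _ _).trans ?_
        set x : N := ⟨g * (t (g : G ⧸ N))⁻¹, hmem _ _ (ht _).symm⟩ with hx
        set y : N := ⟨g' * (t (g' : G ⧸ N))⁻¹, hmem _ _ (ht _).symm⟩ with hy
        have : (x : G)⁻¹ * y = g' * g⁻¹ := by
          have h1 := congrArg (Subtype.val) (hcomm x⁻¹ y)
          simp only [Subgroup.coe_mul, Subgroup.coe_inv] at h1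
          rw [h1, hx, hy]
          simp only [h]
          group
        rw [this]
      constructor
      · intro h
        have hq : (g : G ⧸ N) = g' := by
          have := (QuotientGroup.eq_one_iff _).2 (hF h)
          rw [QuotientGroup.mk_mul, QuotientGroup.mk_inv, mul_inv_eq_one] at this
          exact this.symm
        exact ⟨hq, (key hq).2 h⟩
      · rintro ⟨hq, hv⟩
        exact (key hq).1 hv)
  have := hrat.2
  convert! this using 1
  ext k
  simp only [genFun, PowerSeries.coeff_mk, Set.univ_inter]
  rfl
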